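/- The rank-inclusion of SU configuration spaces on ℂP̄² is null-homotopic: let 𝒜(n) denote the space of integrable nondegenerate SU(n) ℂP̄²-configurations of charge k, topologized as a subspace of M_{k×k}(ℂ)³ × M_{k×n}(ℂ) × M_{n×k}(ℂ). Then the continuous inclusion ι : 𝒜(n) → 𝒜(2k+n), ι(a₁,a₂,x,b,c) = (a₁, a₂, x, (0 | b), (0 ; c)) (padding b on the left by a zero k×2k block and c on the top by a zero 2k×k block), is homotopic to a constant map. -/

import Mathlib

open Matrix

/-- The monad map `A(p,q)` of a `ℂP̄²`-configuration `(a₁, a₂, x, b, c)`, with the `ℂⁿ`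
factor indexed by an arbitrary finite type `N`. -/
noncomputable def cpbarA {k : ℕ} {N : Type} [Fintype N] (a₁ a₂ x : Matrix (Fin k) (Fin k) ℂ)
    (c : Matrix N (Fin k) ℂ) (p : ℂ × ℂ × ℂ) (q : ℂ × ℂ) :
    Matrix (((Fin k ⊕ Fin k) ⊕ (Fin k ⊕ Fin k)) ⊕ N) (Fin k ⊕ Fin k) ℂ :=
  Matrix.fromCols
    (Matrix.fromRows
      (Matrix.fromRows
        (Matrix.fromRows (p.2.2 • a₁)
          (p.1 • (1 : Matrix (Fin k) (Fin k) ℂ) - p.2.2 • (x * a₁)))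
        (Matrix.fromRows (p.2.2 • a₂)
          (p.2.1 • (1 : Matrix (Fin k) (Fin k) ℂ) - p.2.2 • (x * a₂))))
      (p.2.2 • c))
    (Matrix.fromRows
      (Matrix.fromRows
        (Matrix.fromRows (-(q.2 • (1 : Matrix (Fin k) (Fin k) ℂ))) (0 : Matrix (Fin k) (Fin k) ℂ))
        (Matrix.fromRows (q.1 • (1 : Matrix (Fin k) (Fin k) ℂ)) (0 : Matrix (Fin k) (Fin k) ℂ)))
      (0 : Matrix N (Fin k) ℂ))

/-- The monad map `B(p,q)` of a `ℂP̄²`-configuration `(a₁, a₂, x, b, c)`, with the `ℂⁿ`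
factor indexed by an arbitrary finite type `N`. -/
noncomputable def cpbarB {k : ℕ} {N : Type} [Fintype N] (a₁ a₂ x : Matrix (Fin k) (Fin k) ℂ)
    (b : Matrix (Fin k) N ℂ) (p : ℂ × ℂ × ℂ) (q : ℂ × ℂ) :
    Matrix (Fin k ⊕ Fin k) (((Fin k ⊕ Fin k) ⊕ (Fin k ⊕ Fin k)) ⊕ N) ℂ :=
  Matrix.fromRows
    (Matrix.fromCols
      (Matrix.fromCols
        (Matrix.fromCols (p.2.1 • (1 : Matrix (Fin k) (Fin k) ℂ)) (p.2.2 • a₂))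
        (Matrix.fromCols (-(p.1 • (1 : Matrix (Fin k) (Fin k) ℂ))) (-(p.2.2 • a₁))))
      (p.2.2 • b))
    (Matrix.fromCols
      (Matrix.fromCols
        (Matrix.fromCols (q.1 • x) (q.1 • (1 : Matrix (Fin k) (Fin k) ℂ)))
        (Matrix.fromCols (q.2 • x) (q.2 • (1 : Matrix (Fin k) (Fin k) ℂ))))
      (0 : Matrix (Fin k) N ℂ))

/-- The predicate that `(a₁, a₂, x, b, c)` is an integrable nondegenerate
`ℂP̄²`-configuration. -/
def IsCpbarConfig {k : ℕ} {N : Type} [Fintype N]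
    (cfg : Matrix (Fin k) (Fin k) ℂ × Matrix (Fin k) (Fin k) ℂ ×
      Matrix (Fin k) (Fin k) ℂ × Matrix (Fin k) N ℂ × Matrix N (Fin k) ℂ) : Prop :=
  cfg.1 * cfg.2.2.1 * cfg.2.1 - cfg.2.1 * cfg.2.2.1 * cfg.1 +
    cfg.2.2.2.1 * cfg.2.2.2.2 = 0 ∧
  ∀ (p : ℂ × ℂ × ℂ) (q : ℂ × ℂ), p ≠ 0 → q ≠ 0 → p.1 * q.1 + p.2.1 * q.2 = 0 →
    Function.Injective (cpbarA cfg.1 cfg.2.1 cfg.2.2.1 cfg.2.2.2.2 p q).mulVec ∧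
    Function.Surjective (cpbarB cfg.1 cfg.2.1 cfg.2.2.1 cfg.2.2.2.1 p q).mulVec

/-!
Fix matrices `b₀`, `c₀` with `b₀ c₀ = 0`, `b₀` surjective and `c₀` injective; this takes at least
`2k` new coordinates. Scaling `(a₁, a₂, x, b, c)` by weights `(s, s, s, s², s)` multiplies the cubic
integrability equation by `s³`, and putting `t b₀`, `t c₀` in the new coordinates does not change it
because `b₀ c₀ = 0`. With `s = 1 - t`, the path is nondegenerate at `t = 0` because adding rows to
`c` and columns to `b` preserves nondegeneracy, and at `t ≠ 0` because a configuration with `b`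
surjective and `c` injective is nondegenerate whatever `a₁`, `a₂`, `x` are. At `t = 1` it no longer
depends on the initial configuration.
-/

section LinearAlgebra

variable {K : Type*} {m n l : Type*}

theorem sumElim_eq_zero_iff [Zero K] {u : m → K} {v : n → K} :
    Sum.elim u v = 0 ↔ u = 0 ∧ v = 0 := by
  rw [← Sum.elim_zero_zero, Sum.elim_eq_iff]

theorem forall_sum_pi {P : (m ⊕ n → K) → Prop} : (∀ w, P w) ↔ ∀ u v, P (Sum.elim u v) :=
  ⟨fun h _ _ => h _, fun h w => Sum.elim_comp_inl_inr w ▸ h _ _⟩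

theorem eq_zero_of_fst_smul_eq_zero_of_snd_smul_eq_zero {V : Type*} [Ring K] [IsDomain K]
    [AddCommGroup V] [Module K V] [Module.IsTorsionFree K V] {r : K × K} {v : V}
    (hr : r ≠ 0) (h₁ : r.1 • v = 0) (h₂ : r.2 • v = 0) : v = 0 := by
  by_contra hv
  exact hr (Prod.ext ((smul_eq_zero_iff_left hv).1 h₁) ((smul_eq_zero_iff_left hv).1 h₂))

theorem mulVec_injective_iff_forall_mulVec_eq_zero [NonUnitalNonAssocRing K]
    [Fintype n] {A : Matrix m n K} :
    Function.Injective A.mulVec ↔ ∀ v, A *ᵥ v = 0 → v = 0 :=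
  injective_iff_map_eq_zero (AddMonoidHom.mk' A.mulVec A.mulVec_add)

theorem mulVec_surjective_iff_forall_vecMul_eq_zero [Field K] [Fintype m] [Fintype n]
    {A : Matrix m n K} : Function.Surjective A.mulVec ↔ ∀ v, v ᵥ* A = 0 → v = 0 := by
  classical
  refine ⟨fun hA v hv => ?_, fun hA => ?_⟩
  · obtain ⟨B, hB⟩ := mulVec_surjective_iff_exists_right_inverse.1 hA
    rw [← vecMul_one v, ← hB, ← vecMul_vecMul, hv, zero_vecMul]
  · have hrow : LinearIndependent K A.row :=
      vecMul_injective_iff.1 ((injective_iff_map_eq_zero A.vecMulLinear).2 hA)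
    have hrank : A.rank = Module.finrank K (m → K) := by
      rw [hrow.rank_matrix, Module.finrank_fintype_fun_eq_card]
    exact LinearMap.range_eq_top.1 (Submodule.eq_top_of_finrank_eq hrank)

theorem one_submatrix_mul_one_submatrix [NonAssocSemiring K] [Fintype l] [DecidableEq l]
    (f : m → l) (g : n → l) :
    (1 : Matrix l l K).submatrix f id * (1 : Matrix l l K).submatrix id g =
      (1 : Matrix l l K).submatrix f g := by
  rw [← submatrix_mul _ _ _ _ _ Function.bijective_id, mul_one]

theorem exists_mul_eq_zero_ker_eq_bot_of_card_add_card_le (K : Type*) [Semiring K]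
    [Fintype m] [Fintype n] [Fintype l]
    (h : Fintype.card m + Fintype.card n ≤ Fintype.card l) :
    ∃ (b : Matrix m l K) (c : Matrix l n K), b * c = 0 ∧
      (∀ v, v ᵥ* b = 0 → v = 0) ∧ ∀ u, c *ᵥ u = 0 → u = 0 := by
  classical
  obtain ⟨e⟩ : Nonempty (m ⊕ n ↪ l) :=
    Function.Embedding.nonempty_of_card_le (by rwa [Fintype.card_sum])
  refine ⟨(1 : Matrix l l K).submatrix (e ∘ Sum.inl) id,
    (1 : Matrix l l K).submatrix id (e ∘ Sum.inr), ?_, fun v hv => ?_, fun u hu => ?_⟩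
  · rw [one_submatrix_mul_one_submatrix]
    ext i j
    simp [one_apply_ne]
  · rw [← vecMul_one v, ← submatrix_one _ (e.injective.comp Sum.inl_injective),
      ← one_submatrix_mul_one_submatrix, ← vecMul_vecMul, hv, zero_vecMul]
  · rw [← one_mulVec u, ← submatrix_one _ (e.injective.comp Sum.inr_injective),
      ← one_submatrix_mul_one_submatrix, ← mulVec_mulVec, hu, mulVec_zero]

end LinearAlgebra

section Continuity

variable {X R m n l : Type*} [TopologicalSpace X] [TopologicalSpace R]

@[fun_prop]
theorem continuous_matrix_fromCols {f : X → Matrix m n R} {g : X → Matrix m l R}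
    (hf : Continuous f) (hg : Continuous g) : Continuous fun y => fromCols (f y) (g y) :=
  continuous_matrix fun i => Sum.rec (hf.matrix_elem i) (hg.matrix_elem i)

@[fun_prop]
theorem continuous_matrix_fromRows {f : X → Matrix m n R} {g : X → Matrix l n R}
    (hf : Continuous f) (hg : Continuous g) : Continuous fun y => fromRows (f y) (g y) :=
  continuous_matrix <| Sum.rec hf.matrix_elem hg.matrix_elem

end Continuity

section Nondegeneracy

variable {k : ℕ} {M N : Type} [Fintype M] [Fintype N] {a₁ a₂ x : Matrix (Fin k) (Fin k) ℂ}
  {p : ℂ × ℂ × ℂ} {q : ℂ × ℂ}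

theorem cpbarA_mulVec_injective_iff {c : Matrix N (Fin k) ℂ} :
    Function.Injective (cpbarA a₁ a₂ x c p q).mulVec ↔ ∀ u v,
      p.2.2 • (a₁ *ᵥ u) - q.2 • v = 0 → p.1 • u - p.2.2 • ((x * a₁) *ᵥ u) = 0 →
      p.2.2 • (a₂ *ᵥ u) + q.1 • v = 0 → p.2.1 • u - p.2.2 • ((x * a₂) *ᵥ u) = 0 →
      p.2.2 • (c *ᵥ u) = 0 → u = 0 ∧ v = 0 := by
  rw [mulVec_injective_iff_forall_mulVec_eq_zero, forall_sum_pi]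
  simp only [cpbarA, fromCols_mulVec_sumElim, fromRows_mulVec, sub_mulVec, smul_mulVec, neg_mulVec,
    one_mulVec, zero_mulVec, ← Sum.elim_add_add, sumElim_eq_zero_iff, add_zero, ← sub_eq_add_neg,
    and_imp]

theorem cpbarB_mulVec_surjective_iff {b : Matrix (Fin k) N ℂ} :
    Function.Surjective (cpbarB a₁ a₂ x b p q).mulVec ↔ ∀ s t,
      p.2.1 • s + q.1 • (t ᵥ* x) = 0 → p.2.2 • (s ᵥ* a₂) + q.1 • t = 0 →
      -(p.1 • s) + q.2 • (t ᵥ* x) = 0 → -(p.2.2 • (s ᵥ* a₁)) + q.2 • t = 0 →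
      p.2.2 • (s ᵥ* b) = 0 → s = 0 ∧ t = 0 := by
  rw [mulVec_surjective_iff_forall_vecMul_eq_zero, forall_sum_pi]
  simp only [cpbarB, sumElim_vecMul_fromRows, vecMul_fromCols, vecMul_smul, vecMul_neg,
    vecMul_one, vecMul_zero, ← Sum.elim_add_add, sumElim_eq_zero_iff, add_zero, and_imp]

theorem cpbarA_mulVec_injective_of_ker_le {c : Matrix N (Fin k) ℂ} {c' : Matrix M (Fin k) ℂ}
    (hker : ∀ u, c' *ᵥ u = 0 → c *ᵥ u = 0)
    (h : Function.Injective (cpbarA a₁ a₂ x c p q).mulVec) :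
    Function.Injective (cpbarA a₁ a₂ x c' p q).mulVec := by
  rw [cpbarA_mulVec_injective_iff] at h ⊢
  intro u v h₁ h₂ h₃ h₄ hc
  exact h u v h₁ h₂ h₃ h₄ (smul_eq_zero.2 ((smul_eq_zero.1 hc).imp_right (hker u)))

theorem cpbarB_mulVec_surjective_of_ker_le {b : Matrix (Fin k) N ℂ} {b' : Matrix (Fin k) M ℂ}
    (hker : ∀ s, s ᵥ* b' = 0 → s ᵥ* b = 0)
    (h : Function.Surjective (cpbarB a₁ a₂ x b p q).mulVec) :
    Function.Surjective (cpbarB a₁ a₂ x b' p q).mulVec := by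
  rw [cpbarB_mulVec_surjective_iff] at h ⊢
  intro s t h₁ h₂ h₃ h₄ hb
  exact h s t h₁ h₂ h₃ h₄ (smul_eq_zero.2 ((smul_eq_zero.1 hb).imp_right (hker s)))

theorem cpbarA_mulVec_injective_of_ker_eq_bot {c : Matrix N (Fin k) ℂ}
    (hc : ∀ u, c *ᵥ u = 0 → u = 0) (hp : p ≠ 0) (hq : q ≠ 0) :
    Function.Injective (cpbarA a₁ a₂ x c p q).mulVec := by
  obtain ⟨x₁, x₂, x₃⟩ := p
  rw [cpbarA_mulVec_injective_iff]
  intro u v h₁ h₂ h₃ h₄ h₅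
  have hu : u = 0 := by
    rcases eq_or_ne x₃ 0 with rfl | hx₃
    · simp only [zero_smul, sub_zero] at h₂ h₄
      have hx : (x₁, x₂) ≠ 0 := by simpa using hp
      exact eq_zero_of_fst_smul_eq_zero_of_snd_smul_eq_zero hx h₂ h₄
    · exact hc u ((smul_eq_zero_iff_right hx₃).1 h₅)
  subst hu
  simp only [mulVec_zero, smul_zero, zero_sub, zero_add, neg_eq_zero] at h₁ h₃
  exact ⟨rfl, eq_zero_of_fst_smul_eq_zero_of_snd_smul_eq_zero hq h₃ h₁⟩

theorem cpbarB_mulVec_surjective_of_ker_eq_bot {b : Matrix (Fin k) N ℂ}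
    (hb : ∀ s, s ᵥ* b = 0 → s = 0) (hp : p ≠ 0) (hq : q ≠ 0) :
    Function.Surjective (cpbarB a₁ a₂ x b p q).mulVec := by
  obtain ⟨x₁, x₂, x₃⟩ := p
  rw [cpbarB_mulVec_surjective_iff]
  intro s t h₁ h₂ h₃ h₄ h₅
  rcases eq_or_ne x₃ 0 with rfl | hx₃
  · simp only [zero_smul, neg_zero, zero_add] at h₂ h₄
    have ht : t = 0 := eq_zero_of_fst_smul_eq_zero_of_snd_smul_eq_zero hq h₂ h₄
    subst ht
    simp only [zero_vecMul, smul_zero, add_zero, neg_eq_zero] at h₁ h₃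
    have hx : (x₁, x₂) ≠ 0 := by simpa using hp
    exact ⟨eq_zero_of_fst_smul_eq_zero_of_snd_smul_eq_zero hx h₃ h₁, rfl⟩
  · have hs : s = 0 := hb s ((smul_eq_zero_iff_right hx₃).1 h₅)
    subst hs
    simp only [zero_vecMul, smul_zero, neg_zero, zero_add] at h₂ h₄
    exact ⟨rfl, eq_zero_of_fst_smul_eq_zero_of_snd_smul_eq_zero hq h₂ h₄⟩

theorem isCpbarConfig_of_ker_eq_bot {b : Matrix (Fin k) N ℂ} {c : Matrix N (Fin k) ℂ}
    (hint : a₁ * x * a₂ - a₂ * x * a₁ + b * c = 0)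
    (hb : ∀ s, s ᵥ* b = 0 → s = 0) (hc : ∀ u, c *ᵥ u = 0 → u = 0) :
    IsCpbarConfig (a₁, a₂, x, b, c) :=
  ⟨hint, fun _ _ hp hq _ => ⟨cpbarA_mulVec_injective_of_ker_eq_bot hc hp hq,
    cpbarB_mulVec_surjective_of_ker_eq_bot hb hp hq⟩⟩

theorem IsCpbarConfig.fromCols_fromRows {b : Matrix (Fin k) N ℂ} {c : Matrix N (Fin k) ℂ}
    (h : IsCpbarConfig (a₁, a₂, x, b, c)) {b' : Matrix (Fin k) M ℂ} {c' : Matrix M (Fin k) ℂ}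
    (h' : b' * c' = 0) : IsCpbarConfig (a₁, a₂, x, fromCols b' b, fromRows c' c) := by
  refine ⟨?_, fun p q hp hq hpq => ⟨?_, ?_⟩⟩
  · simpa only [fromCols_mul_fromRows, h', zero_add] using h.1
  · refine cpbarA_mulVec_injective_of_ker_le (fun u hu => ?_) (h.2 p q hp hq hpq).1
    rw [fromRows_mulVec, sumElim_eq_zero_iff] at hu
    exact hu.2
  · refine cpbarB_mulVec_surjective_of_ker_le (fun s hs => ?_) (h.2 p q hp hq hpq).2
    rw [vecMul_fromCols, sumElim_eq_zero_iff] at hs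
    exact hs.2

end Nondegeneracy

section Contraction

variable {k : ℕ} {M N : Type}

/-- The tuples `(a₁, a₂, x, b, c)` of matrices among which the `ℂP̄²`-configurations of charge `k`
are singled out by `IsCpbarConfig`. -/
abbrev CpbarData (k : ℕ) (N : Type) : Type :=
  Matrix (Fin k) (Fin k) ℂ × Matrix (Fin k) (Fin k) ℂ × Matrix (Fin k) (Fin k) ℂ ×
    Matrix (Fin k) N ℂ × Matrix N (Fin k) ℂ

/-- The space `𝒜` of integrable nondegenerate `ℂP̄²`-configurations of charge `k`, with the
subspace topology. -/
abbrev CpbarConfigSpace (k : ℕ) (N : Type) [Fintype N] : Type :=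
  {cfg : CpbarData k N // IsCpbarConfig cfg}

/-- The path `t ↦ ((1-t)a₁, (1-t)a₂, (1-t)x, (tb₀ | (1-t)²b), (tc₀ ; (1-t)c))` along which the
rank-inclusion is contracted. -/
def cpbarContraction (b₀ : Matrix (Fin k) M ℂ) (c₀ : Matrix M (Fin k) ℂ) (t : ℂ)
    (cfg : CpbarData k N) : CpbarData k (M ⊕ N) :=
  ((1 - t) • cfg.1, (1 - t) • cfg.2.1, (1 - t) • cfg.2.2.1,
    fromCols (t • b₀) ((1 - t) ^ 2 • cfg.2.2.2.1), fromRows (t • c₀) ((1 - t) • cfg.2.2.2.2))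

variable {b₀ : Matrix (Fin k) M ℂ} {c₀ : Matrix M (Fin k) ℂ}

theorem continuous_cpbarContraction :
    Continuous fun y : ℂ × CpbarData k N => cpbarContraction b₀ c₀ y.1 y.2 := by
  unfold cpbarContraction
  fun_prop

theorem cpbarContraction_zero (cfg : CpbarData k N) :
    cpbarContraction b₀ c₀ 0 cfg =
      (cfg.1, cfg.2.1, cfg.2.2.1, fromCols 0 cfg.2.2.2.1, fromRows 0 cfg.2.2.2.2) := by
  simp [cpbarContraction]

theorem cpbarContraction_one (cfg : CpbarData k N) :
    cpbarContraction b₀ c₀ 1 cfg = (0, 0, 0, fromCols b₀ 0, fromRows c₀ 0) := by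
  simp [cpbarContraction]

variable [Fintype M] [Fintype N]

theorem isCpbarConfig_cpbarContraction_of_ne_zero (h₀ : b₀ * c₀ = 0)
    (hb₀ : ∀ s, s ᵥ* b₀ = 0 → s = 0) (hc₀ : ∀ u, c₀ *ᵥ u = 0 → u = 0) {t : ℂ} (ht : t ≠ 0)
    {a₁ a₂ x : Matrix (Fin k) (Fin k) ℂ} {b : Matrix (Fin k) N ℂ} {c : Matrix N (Fin k) ℂ}
    (hint : a₁ * x * a₂ - a₂ * x * a₁ + b * c = 0) :
    IsCpbarConfig (cpbarContraction b₀ c₀ t (a₁, a₂, x, b, c)) := by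
  refine isCpbarConfig_of_ker_eq_bot ?_ (fun s hs => ?_) (fun u hu => ?_)
  · calc
      (1 - t) • a₁ * (1 - t) • x * (1 - t) • a₂ - (1 - t) • a₂ * (1 - t) • x * (1 - t) • a₁ +
            fromCols (t • b₀) ((1 - t) ^ 2 • b) * fromRows (t • c₀) ((1 - t) • c) =
          (1 - t) ^ 3 • (a₁ * x * a₂ - a₂ * x * a₁ + b * c) := by
        simp only [fromCols_mul_fromRows, Matrix.smul_mul, Matrix.mul_smul, h₀, smul_zero,
          zero_add, smul_smul, smul_add, smul_sub]
        ring_nf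
      _ = 0 := by rw [hint, smul_zero]
  · rw [vecMul_fromCols, sumElim_eq_zero_iff, vecMul_smul, smul_eq_zero_iff_right ht] at hs
    exact hb₀ s hs.1
  · rw [fromRows_mulVec, sumElim_eq_zero_iff, smul_mulVec, smul_eq_zero_iff_right ht] at hu
    exact hc₀ u hu.1

theorem IsCpbarConfig.cpbarContraction (h₀ : b₀ * c₀ = 0)
    (hb₀ : ∀ s, s ᵥ* b₀ = 0 → s = 0) (hc₀ : ∀ u, c₀ *ᵥ u = 0 → u = 0) {cfg : CpbarData k N}
    (h : IsCpbarConfig cfg) (t : ℂ) : IsCpbarConfig (cpbarContraction b₀ c₀ t cfg) := by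
  rcases eq_or_ne t 0 with rfl | ht
  · rw [cpbarContraction_zero]
    exact h.fromCols_fromRows (Matrix.zero_mul _)
  · exact isCpbarConfig_cpbarContraction_of_ne_zero h₀ hb₀ hc₀ ht h.1

/-- The rank-inclusion `ι : 𝒜(N) → 𝒜(M ⊕ N)`, padding `b` and `c` by zero blocks indexed
by `M`. -/
def cpbarRankInclusion (k : ℕ) (M N : Type) [Fintype M] [Fintype N] :
    C(CpbarConfigSpace k N, CpbarConfigSpace k (M ⊕ N)) where
  toFun a := ⟨(a.1.1, a.1.2.1, a.1.2.2.1, fromCols 0 a.1.2.2.2.1, fromRows 0 a.1.2.2.2.2),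
    a.2.fromCols_fromRows (Matrix.zero_mul _)⟩
  continuous_toFun := by fun_prop

theorem cpbarRankInclusion_nullhomotopic_of_mul_eq_zero (h₀ : b₀ * c₀ = 0)
    (hb₀ : ∀ s, s ᵥ* b₀ = 0 → s = 0) (hc₀ : ∀ u, c₀ *ᵥ u = 0 → u = 0) :
    (cpbarRankInclusion k M N).Nullhomotopic := by
  have hend : IsCpbarConfig (cpbarContraction b₀ c₀ 1 (0 : CpbarData k N)) :=
    isCpbarConfig_cpbarContraction_of_ne_zero h₀ hb₀ hc₀ one_ne_zero (by simp)
  refine ⟨⟨_, hend⟩, ⟨{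
    toFun := fun y => ⟨cpbarContraction b₀ c₀ (y.1 : ℝ) y.2.1, y.2.2.cpbarContraction h₀ hb₀ hc₀ _⟩
    continuous_toFun := ?_
    map_zero_left := fun a => Subtype.ext ?_
    map_one_left := fun a => Subtype.ext ?_ }⟩⟩
  · exact (continuous_cpbarContraction.comp
      (f := fun y : unitInterval × CpbarConfigSpace k N => (((y.1 : ℝ) : ℂ), y.2.1))
      (by fun_prop)).subtype_mk _
  · simp [cpbarContraction_zero, cpbarRankInclusion]
  · simp [cpbarContraction_one]

end Contraction

theorem rank_inclusion_null_homotopic_cpbar_general {k : ℕ} {M N : Type} [Fintype M] [Fintype N]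
    (hM : 2 * k ≤ Fintype.card M) : (cpbarRankInclusion k M N).Nullhomotopic := by
  obtain ⟨b₀, c₀, h₀, hb₀, hc₀⟩ :=
    exists_mul_eq_zero_ker_eq_bot_of_card_add_card_le (m := Fin k) (n := Fin k) (l := M) ℂ
      (by rwa [Fintype.card_fin, ← two_mul])
  exact cpbarRankInclusion_nullhomotopic_of_mul_eq_zero h₀ hb₀ hc₀

/-- The rank-inclusion `ι : 𝒜(n) → 𝒜(2k+n)` of the spaces of integrable nondegenerate
`SU(n)` `ℂP̄²`-configurations of charge `k`,
`ι(a₁,a₂,x,b,c) = (a₁, a₂, x, (0 | b), (0 ; c))`, is homotopic to a constant map: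
there is a continuous homotopy `H` with `H(0,·) = ι` and `H(1,·)` constant. -/
theorem rank_inclusion_null_homotopic_cpbar {k n : ℕ} (hk : 1 ≤ k) :
    ∃ H : unitInterval ×
        {cfg : Matrix (Fin k) (Fin k) ℂ × Matrix (Fin k) (Fin k) ℂ ×
          Matrix (Fin k) (Fin k) ℂ × Matrix (Fin k) (Fin n) ℂ ×
          Matrix (Fin n) (Fin k) ℂ // IsCpbarConfig cfg} →
        {cfg : Matrix (Fin k) (Fin k) ℂ × Matrix (Fin k) (Fin k) ℂ ×
          Matrix (Fin k) (Fin k) ℂ × Matrix (Fin k) (Fin (2 * k) ⊕ Fin n) ℂ ×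
          Matrix (Fin (2 * k) ⊕ Fin n) (Fin k) ℂ // IsCpbarConfig cfg},
      Continuous H ∧
      (∀ a, (H (0, a)).val =
        (a.val.1, a.val.2.1, a.val.2.2.1,
          Matrix.fromCols (0 : Matrix (Fin k) (Fin (2 * k)) ℂ) a.val.2.2.2.1,
          Matrix.fromRows (0 : Matrix (Fin (2 * k)) (Fin k) ℂ) a.val.2.2.2.2)) ∧
      (∃ c₀, ∀ a, H (1, a) = c₀) := by
  obtain ⟨c₀, ⟨H⟩⟩ :=
    rank_inclusion_null_homotopic_cpbar_general (N := Fin n) (Fintype.card_fin (2 * k)).ge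
  exact ⟨H, H.continuous, fun a => congrArg Subtype.val (H.apply_zero a), c₀, H.apply_one⟩
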